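/- arXiv:2405.07100 — 3 statements merged into one kernel-verified Lean document; each statement's English description precedes it below -/
import Mathlib

section
/- Let W be an n×n real doubly stochastic matrix and let λ_W denote the ℓ²-operator norm of W − (1/n)𝟙𝟙ᵀ, where 𝟙 ∈ ℝⁿ is the all-ones vector. Then for every family x = (x_1,…,x_n) of vectors in ℝ^d, with x̄ = (1/n)∑_{j=1}^n x_j, one has ∑_{i=1}^n ‖∑_{j=1}^n W_{ij} x_j − x̄‖² ≤ λ_W² ∑_{i=1}^n ‖x_i − x̄‖². (Lemma 1, part (5a).) -/
/-! Both sides split over the `d` coordinates, so it suffices to treat real vectors. The centred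
vector `y = x - x̄` has coordinate sum zero, hence `(W - (1/n) 𝟙 𝟙ᵀ) y = W y = W x - x̄`, using that
the rows of `W` sum to one; the defining inequality of the operator norm at `y` then concludes. -/

open Finset

/-- A matrix is doubly stochastic if its entries are nonnegative and every
row sum and every column sum equals 1. -/
def IsDoublyStochastic {n : ℕ} (W : Matrix (Fin n) (Fin n) ℝ) : Prop :=
  (∀ i j, 0 ≤ W i j) ∧ (∀ i, ∑ j, W i j = 1) ∧ (∀ j, ∑ i, W i j = 1)

/-- `lamW W` is the ℓ²-operator norm of `W - (1/n) 𝟙 𝟙ᵀ`. -/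
noncomputable def lamW {n : ℕ} (W : Matrix (Fin n) (Fin n) ℝ) : ℝ :=
  ‖LinearMap.toContinuousLinearMap
    (Matrix.toEuclideanLin (W - Matrix.of (fun _ _ => (n : ℝ)⁻¹)))‖

/-- The operator norm bound for `W - (1/n) 𝟙 𝟙ᵀ`, written in coordinates. -/
lemma sum_sq_le_lamW_sq {n : ℕ} (W : Matrix (Fin n) (Fin n) ℝ) (y : Fin n → ℝ) :
    ∑ i, (∑ j, (W i j - (n : ℝ)⁻¹) * y j) ^ 2 ≤ lamW W ^ 2 * ∑ i, y i ^ 2 := by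
  have h := ContinuousLinearMap.le_opNorm (LinearMap.toContinuousLinearMap
    (Matrix.toEuclideanLin (W - Matrix.of (fun _ _ => (n : ℝ)⁻¹)))) (WithLp.toLp 2 y)
  have h2 := pow_le_pow_left₀ (norm_nonneg _) h 2
  rw [mul_pow, EuclideanSpace.real_norm_sq_eq, EuclideanSpace.real_norm_sq_eq] at h2
  simpa [lamW, Matrix.toLpLin_apply, Matrix.mulVec, dotProduct, sub_mul] using h2

/-- The one-dimensional case of the contraction estimate. -/
lemma sum_sq_sub_mean_le {n : ℕ} (hn : 1 ≤ n) (W : Matrix (Fin n) (Fin n) ℝ)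
    (hW : ∀ i, ∑ j, W i j = 1) (x : Fin n → ℝ) :
    ∑ i, ((∑ j, W i j * x j) - (n : ℝ)⁻¹ * ∑ j, x j) ^ 2 ≤
      lamW W ^ 2 * ∑ i, (x i - (n : ℝ)⁻¹ * ∑ j, x j) ^ 2 := by
  have hn0 : (n : ℝ) ≠ 0 := by positivity
  refine le_of_eq_of_le (Finset.sum_congr rfl fun i _ => ?_)
    (sum_sq_le_lamW_sq W fun j => x j - (n : ℝ)⁻¹ * ∑ j, x j)
  simp only [sub_mul, mul_sub, Finset.sum_sub_distrib, ← Finset.sum_mul, ← Finset.mul_sum, hW]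
  simp [hn0]

theorem stmt0 {n d : ℕ} (hn : 1 ≤ n) (hd : 1 ≤ d)
    (W : Matrix (Fin n) (Fin n) ℝ) (hW : IsDoublyStochastic W)
    (x : Fin n → EuclideanSpace ℝ (Fin d)) :
    ∑ i, ‖(∑ j, W i j • x j) - (n : ℝ)⁻¹ • ∑ j, x j‖ ^ 2 ≤
      lamW W ^ 2 * ∑ i, ‖x i - (n : ℝ)⁻¹ • ∑ j, x j‖ ^ 2 := by
  simp only [EuclideanSpace.real_norm_sq_eq]
  -- Summing over coordinates first reduces the claim to one inequality per coordinate.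
  rw [Finset.sum_comm, Finset.sum_comm (s := Finset.univ (α := Fin n)), Finset.mul_sum]
  refine Finset.sum_le_sum fun k _ => ?_
  simpa using sum_sq_sub_mean_le hn W hW.2.1 fun i => x i k
end

section
/- Let W be an n×n real doubly stochastic matrix and let λ_W denote the ℓ²-operator norm of W − (1/n)𝟙𝟙ᵀ. Let x = (x_1,…,x_n) and δ = (δ_1,…,δ_n) be families of vectors in ℝ^d, let α > 0, and define x'_i := ∑_{j=1}^n W_{ij}(x_j + α δ_j). Then for every η > 0, ∑_{i=1}^n ‖x'_i − x̄'‖² ≤ (1 + η) λ_W² ∑_{i=1}^n ‖x_i − x̄‖² + (1 + 1/η) α² λ_W² ∑_{i=1}^n ‖δ_i‖², where x̄ and x̄' are the averages of the families x and x'. (Lemma 2: consensus-error recursion for the D-MSSCA x-update.) -/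
/-!
Write `B = W - (1/n) 𝟙 𝟙ᵀ`. Since the columns of `W` sum to 1, averaging commutes with applying `W`,
so the deviation of `x' = W (x + α δ)` from its average is `B (x + α δ)`; since the rows of `W` sum
to 1, `B 𝟙 = 0`, so `x` may be replaced by its deviation `x - x̄` (`deviation_eq`). The operator norm
of `B` bounds its action on families of vectors in `ℝ^d`, coordinate by coordinate
(`sum_norm_sq_le`), and Young's inequality (`norm_add_sq_le_young`) separates the contributions
of `x - x̄` and `α δ`.
-/

open Finset

/-- The operator norm of `B` on `ℝⁿ` also bounds `B ⊗ I_d` on `n`-tuples of vectors in `ℝ^d`. -/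
theorem sum_norm_sq_le {n d : ℕ} (B : Matrix (Fin n) (Fin n) ℝ)
    (y : Fin n → EuclideanSpace ℝ (Fin d)) :
    ∑ i, ‖∑ j, B i j • y j‖ ^ 2 ≤
      ‖LinearMap.toContinuousLinearMap (Matrix.toEuclideanLin B)‖ ^ 2 * ∑ i, ‖y i‖ ^ 2 := by
  -- Swap the sums so that each coordinate `k` gives one vector of `ℝⁿ`.
  simp only [EuclideanSpace.real_norm_sq_eq]
  rw [Finset.sum_comm, Finset.sum_comm (f := fun i k => (y i) k ^ 2), Finset.mul_sum]
  refine Finset.sum_le_sum fun k _ => ?_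
  have h := (LinearMap.toContinuousLinearMap (Matrix.toEuclideanLin B)).le_opNorm
    (WithLp.toLp 2 fun j => y j k)
  have h2 := pow_le_pow_left₀ (norm_nonneg _) h 2
  rw [mul_pow, EuclideanSpace.real_norm_sq_eq, EuclideanSpace.real_norm_sq_eq] at h2
  simpa [Matrix.mulVec, dotProduct] using h2

theorem norm_add_sq_le_young {E : Type*} [SeminormedAddCommGroup E] (a b : E) {η : ℝ}
    (hη : 0 < η) :
    ‖a + b‖ ^ 2 ≤ (1 + η) * ‖a‖ ^ 2 + (1 + 1 / η) * ‖b‖ ^ 2 := by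
  have h1 : ‖a + b‖ ^ 2 ≤ (‖a‖ + ‖b‖) ^ 2 := pow_le_pow_left₀ (norm_nonneg _) (norm_add_le a b) 2
  have h2 : (1 + η) * ‖a‖ ^ 2 + (1 + 1 / η) * ‖b‖ ^ 2 - (‖a‖ + ‖b‖) ^ 2
      = (η * ‖a‖ - ‖b‖) ^ 2 / η := by
    field_simp
    ring
  have h3 : 0 ≤ (η * ‖a‖ - ‖b‖) ^ 2 / η := by positivity
  linarith

/-- The deviation of `W (x + u)` from its average is `B` applied to the deviation of `x`, plus `B u`. -/
theorem deviation_eq {n : ℕ} {E : Type*} [AddCommGroup E] [Module ℝ E] (hn : 1 ≤ n)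
    {W B : Matrix (Fin n) (Fin n) ℝ} (hW : IsDoublyStochastic W)
    (hB : B = W - Matrix.of (fun _ _ => (n : ℝ)⁻¹)) (x u : Fin n → E) (i : Fin n) :
    (∑ j, W i j • (x j + u j)) - (n : ℝ)⁻¹ • ∑ k, ∑ j, W k j • (x j + u j) =
      (∑ j, B i j • (x j - (n : ℝ)⁻¹ • ∑ k, x k)) +
        ∑ j, B i j • u j := by
  obtain ⟨-, hrow, hcol⟩ := hW
  have hn0 : (n : ℝ) ≠ 0 := by positivity
  have hmean : ∑ k, ∑ j, W k j • (x j + u j) = ∑ j, (x j + u j) := by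
    rw [Finset.sum_comm]
    simp only [← Finset.sum_smul, hcol, one_smul]
  have hker : ∑ j, B i j = 0 := by
    simp [hB, Finset.sum_sub_distrib, hrow, hn0]
  have hx : ∑ j, B i j • (x j - (n : ℝ)⁻¹ • ∑ k, x k) =
      ∑ j, B i j • x j := by
    simp only [smul_sub, Finset.sum_sub_distrib]
    rw [← Finset.sum_smul, hker, zero_smul, sub_zero]
  rw [hmean, hx, ← Finset.sum_add_distrib, Finset.smul_sum, ← Finset.sum_sub_distrib]
  refine Finset.sum_congr rfl fun j _ => ?_
  rw [← smul_add, hB, Matrix.sub_apply, Matrix.of_apply, sub_smul]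

theorem stmt3 {n d : ℕ} (hn : 1 ≤ n) (hd : 1 ≤ d)
    (W : Matrix (Fin n) (Fin n) ℝ) (hW : IsDoublyStochastic W)
    (x δ : Fin n → EuclideanSpace ℝ (Fin d)) (α : ℝ) (hα : 0 < α)
    (x' : Fin n → EuclideanSpace ℝ (Fin d))
    (hx' : ∀ i, x' i = ∑ j, W i j • (x j + α • δ j))
    (η : ℝ) (hη : 0 < η) :
    ∑ i, ‖x' i - (n : ℝ)⁻¹ • ∑ j, x' j‖ ^ 2 ≤
      (1 + η) * lamW W ^ 2 * ∑ i, ‖x i - (n : ℝ)⁻¹ • ∑ j, x j‖ ^ 2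
        + (1 + 1 / η) * α ^ 2 * lamW W ^ 2 * ∑ i, ‖δ i‖ ^ 2 := by
  set B := W - Matrix.of (fun _ _ => (n : ℝ)⁻¹) with hB
  set a : Fin n → EuclideanSpace ℝ (Fin d) :=
    fun i => ∑ j, B i j • (x j - (n : ℝ)⁻¹ • ∑ k, x k) with ha
  set b : Fin n → EuclideanSpace ℝ (Fin d) := fun i => ∑ j, B i j • (α • δ j) with hb
  have hdev : ∀ i, x' i - (n : ℝ)⁻¹ • ∑ j, x' j = a i + b i := fun i => by
    simp only [hx']
    exact deviation_eq hn hW hB x (fun j => α • δ j) i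
  have hA : ∑ i, ‖a i‖ ^ 2 ≤ lamW W ^ 2 * ∑ i, ‖x i - (n : ℝ)⁻¹ • ∑ j, x j‖ ^ 2 :=
    sum_norm_sq_le B _
  have hD : ∑ i, ‖b i‖ ^ 2 ≤ lamW W ^ 2 * (α ^ 2 * ∑ i, ‖δ i‖ ^ 2) := by
    refine (sum_norm_sq_le B _).trans_eq ?_
    simp only [norm_smul, mul_pow, Real.norm_eq_abs, sq_abs, ← Finset.mul_sum]
    rfl
  calc ∑ i, ‖x' i - (n : ℝ)⁻¹ • ∑ j, x' j‖ ^ 2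
      ≤ ∑ i, ((1 + η) * ‖a i‖ ^ 2 + (1 + 1 / η) * ‖b i‖ ^ 2) := by
        refine Finset.sum_le_sum fun i _ => ?_
        rw [hdev i]
        exact norm_add_sq_le_young _ _ hη
    _ = (1 + η) * ∑ i, ‖a i‖ ^ 2 + (1 + 1 / η) * ∑ i, ‖b i‖ ^ 2 := by
        rw [Finset.sum_add_distrib, Finset.mul_sum, Finset.mul_sum]
    _ ≤ (1 + η) * (lamW W ^ 2 * ∑ i, ‖x i - (n : ℝ)⁻¹ • ∑ j, x j‖ ^ 2) +
          (1 + 1 / η) * (lamW W ^ 2 * (α ^ 2 * ∑ i, ‖δ i‖ ^ 2)) := by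
        gcongr
    _ = _ := by ring
end

section
/- Let n ≥ 1, d ≥ 1, L > 0, μ > 0, γ > 0, α ∈ (0,1]. Let u_1,…,u_n : ℝ^d → ℝ be differentiable with L-Lipschitz gradients and set u := (1/n)∑_{i=1}^n u_i. Let h : ℝ^d → ℝ, let W be an n×n doubly stochastic matrix, and let x_i, x̂_i, y_i, z_i ∈ ℝ^d (i = 1,…,n) with x̄ := (1/n)∑ x_i, ȳ := (1/n)∑ y_i, z̄ := (1/n)∑ z_i, m := (1/n)∑_i ∇u_i(x_i), and x'_i := ∑_{j=1}^n W_{ij}(x_j + α(x̂_j − x_j)) with x̄' := (1/n)∑ x'_i. Assume ȳ = z̄ and the descent inequality (1/n)∑_{i=1}^n ⟨y_i, x̂_i − x_i⟩ ≤ −(μ/n)∑_{i=1}^n ‖x̂_i − x_i‖² − (1/(αn))∑_{i=1}^n h(x'_i) + (1/(αn))∑_{i=1}^n h(x_i). Then u(x̄') + (1/n)∑_{i=1}^n h(x'_i) − u(x̄) − (1/n)∑_{i=1}^n h(x_i) ≤ (3αγ/(2n)) ( L² ∑_{i=1}^n ‖x_i − x̄‖² + n ‖m − z̄‖² + ∑_{i=1}^n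 ‖y_i − ȳ‖² ) + (α/n)(−μ + 1/(2γ) + αL/2) ∑_{i=1}^n ‖x̂_i − x_i‖². (Lemma 9, per-iteration form: descent of the global objective along the averaged D-MSSCA update.) -/
/-!
Write `δᵢ = x̂ᵢ - xᵢ`, with average `δ̄`. Since the columns of `W` sum to one, mixing preserves
averages, so `x̄' = x̄ + α δ̄`. The quadratic upper bound for each `L`-smooth `uᵢ`, averaged over `i`,
gives `U x̄' - U x̄ ≤ α ⟪g, δ̄⟫ + L α² ‖δ̄‖² / 2`, where `g` is the average of the `∇uᵢ(x̄)`. Split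

  `⟪g, δᵢ⟫ = ⟪yᵢ, δᵢ⟫ + ⟪(g - m) + (m - z̄) + (ȳ - yᵢ), δᵢ⟫`,

which uses `ȳ = z̄`. The first part is controlled by the assumed descent inequality, in which the
`h`-terms cancel those on the left; the second by Young's inequality with parameter `γ` and
`‖a + b + c‖² ≤ 3 (‖a‖² + ‖b‖² + ‖c‖²)`. Convexity of the squared norm bounds `‖δ̄‖²` and, together
with Lipschitz continuity of the gradients, `‖g - m‖²`.
-/

open Finset
open scoped RealInnerProductSpace

/-- The quadratic upper bound for a function with `L`-Lipschitz gradient. -/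
lemma smooth_upper_bound {E : Type*} [NormedAddCommGroup E] [InnerProductSpace ℝ E]
    [CompleteSpace E] {f : E → ℝ} {L : ℝ} (hf : Differentiable ℝ f)
    (hlip : ∀ a b, ‖gradient f a - gradient f b‖ ≤ L * ‖a - b‖) (a v : E) :
    f (a + v) ≤ f a + ⟪gradient f a, v⟫ + L / 2 * ‖v‖ ^ 2 := by
  have hd : ∀ t : ℝ, HasDerivAt
      (fun t : ℝ => f (a + t • v) - t * ⟪gradient f a, v⟫ - L / 2 * t ^ 2 * ‖v‖ ^ 2)
      (⟪gradient f (a + t • v), v⟫ - ⟪gradient f a, v⟫ - L * t * ‖v‖ ^ 2) t := by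
    intro t
    have h1 : HasDerivAt (fun t : ℝ => a + t • v) v t := by
      simpa using ((hasDerivAt_id t).smul_const v).const_add a
    have h2 := (hf (a + t • v)).hasGradientAt.hasFDerivAt.comp_hasDerivAt t h1
    have h3 := (hasDerivAt_id t).mul_const ⟪gradient f a, v⟫
    have h4 := (((hasDerivAt_id t).pow 2).const_mul (L / 2)).mul_const (‖v‖ ^ 2)
    refine ((h2.sub h3).sub h4).congr_deriv ?_
    simp only [InnerProductSpace.toDual_apply_apply, id_eq, Nat.cast_ofNat]
    ring
  -- The remainder after subtracting the quadratic model is antitone along the segment.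
  have hanti : AntitoneOn
      (fun t : ℝ => f (a + t • v) - t * ⟪gradient f a, v⟫ - L / 2 * t ^ 2 * ‖v‖ ^ 2)
      (Set.Icc 0 1) := by
    refine antitoneOn_of_hasDerivWithinAt_nonpos (convex_Icc 0 1)
      (fun t _ => (hd t).continuousAt.continuousWithinAt)
      (fun t _ => (hd t).hasDerivWithinAt) ?_
    intro t ht
    rw [interior_Icc] at ht
    have h1 := real_inner_le_norm (gradient f (a + t • v) - gradient f a) v
    have h2 := hlip (a + t • v) a
    rw [add_sub_cancel_left, norm_smul, Real.norm_of_nonneg ht.1.le] at h2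
    rw [inner_sub_left] at h1
    nlinarith [mul_le_mul_of_nonneg_right h2 (norm_nonneg v)]
  have := hanti (Set.left_mem_Icc.2 zero_le_one) (Set.right_mem_Icc.2 zero_le_one) zero_le_one
  simp only [one_smul, zero_smul, add_zero] at this
  linarith

lemma norm_sq_average_le {E : Type*} [NormedAddCommGroup E] [NormedSpace ℝ E] {n : ℕ}
    (hn : 1 ≤ n) (v : Fin n → E) :
    ‖(n : ℝ)⁻¹ • ∑ i, v i‖ ^ 2 ≤ (n : ℝ)⁻¹ * ∑ i, ‖v i‖ ^ 2 := by
  have hn0 : (0 : ℝ) < n := by exact_mod_cast hn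
  have h1 : ‖∑ i, v i‖ ^ 2 ≤ (n : ℝ) * ∑ i, ‖v i‖ ^ 2 := by
    calc ‖∑ i, v i‖ ^ 2 ≤ (∑ i, ‖v i‖) ^ 2 := by
          gcongr
          exact norm_sum_le _ _
      _ ≤ _ := by simpa using sq_sum_le_card_mul_sum_sq (s := univ) (f := fun i => ‖v i‖)
  rw [norm_smul, mul_pow, Real.norm_of_nonneg (by positivity)]
  calc ((n : ℝ)⁻¹) ^ 2 * ‖∑ i, v i‖ ^ 2 ≤ ((n : ℝ)⁻¹) ^ 2 * ((n : ℝ) * ∑ i, ‖v i‖ ^ 2) := by gcongr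
    _ = _ := by field_simp

/-- Young's inequality with parameter `γ`, for a sum of three vectors. -/
lemma inner_add_three_le {E : Type*} [NormedAddCommGroup E] [InnerProductSpace ℝ E]
    {γ : ℝ} (hγ : 0 < γ) (a b c v : E) :
    ⟪a + b + c, v⟫ ≤
      3 * γ / 2 * (‖a‖ ^ 2 + ‖b‖ ^ 2 + ‖c‖ ^ 2) + 1 / (2 * γ) * ‖v‖ ^ 2 := by
  have h1 : ⟪a + b + c, v⟫ ≤ (‖a‖ + ‖b‖ + ‖c‖) * ‖v‖ :=
    (real_inner_le_norm _ _).trans (by gcongr; exact norm_add₃_le)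
  have h2 : (‖a‖ + ‖b‖ + ‖c‖) * ‖v‖ ≤
      γ / 2 * (‖a‖ + ‖b‖ + ‖c‖) ^ 2 + 1 / (2 * γ) * ‖v‖ ^ 2 := by
    have : γ / 2 * (‖a‖ + ‖b‖ + ‖c‖) ^ 2 + 1 / (2 * γ) * ‖v‖ ^ 2 - (‖a‖ + ‖b‖ + ‖c‖) * ‖v‖ =
        1 / (2 * γ) * (γ * (‖a‖ + ‖b‖ + ‖c‖) - ‖v‖) ^ 2 := by
      field_simp
      ring
    have h3 : 0 ≤ 1 / (2 * γ) * (γ * (‖a‖ + ‖b‖ + ‖c‖) - ‖v‖) ^ 2 := by positivity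
    linarith
  have h3 : (‖a‖ + ‖b‖ + ‖c‖) ^ 2 ≤ 3 * (‖a‖ ^ 2 + ‖b‖ ^ 2 + ‖c‖ ^ 2) := by
    nlinarith [sq_nonneg (‖a‖ - ‖b‖), sq_nonneg (‖a‖ - ‖c‖), sq_nonneg (‖b‖ - ‖c‖)]
  nlinarith [mul_le_mul_of_nonneg_left h3 hγ.le]

theorem stmt13 {n d : ℕ} (hn : 1 ≤ n) (hd : 1 ≤ d)
    (L μ γ α : ℝ) (hL : 0 < L) (hμ : 0 < μ) (hγ : 0 < γ)
    (hα : α ∈ Set.Ioc (0 : ℝ) 1)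
    (u : Fin n → EuclideanSpace ℝ (Fin d) → ℝ)
    (hdiff : ∀ i, Differentiable ℝ (u i))
    (hlip : ∀ i a b, ‖gradient (u i) a - gradient (u i) b‖ ≤ L * ‖a - b‖)
    (U : EuclideanSpace ℝ (Fin d) → ℝ)
    (hU : ∀ v, U v = (n : ℝ)⁻¹ * ∑ i, u i v)
    (h : EuclideanSpace ℝ (Fin d) → ℝ)
    (W : Matrix (Fin n) (Fin n) ℝ) (hW : IsDoublyStochastic W)
    (x xhat y z : Fin n → EuclideanSpace ℝ (Fin d))
    (x' : Fin n → EuclideanSpace ℝ (Fin d))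
    (hx' : ∀ i, x' i = ∑ j, W i j • (x j + α • (xhat j - x j)))
    (xbar xbar' ybar zbar m : EuclideanSpace ℝ (Fin d))
    (hxbar : xbar = (n : ℝ)⁻¹ • ∑ i, x i)
    (hxbar' : xbar' = (n : ℝ)⁻¹ • ∑ i, x' i)
    (hybar : ybar = (n : ℝ)⁻¹ • ∑ i, y i)
    (hzbar : zbar = (n : ℝ)⁻¹ • ∑ i, z i)
    (hm : m = (n : ℝ)⁻¹ • ∑ i, gradient (u i) (x i))
    (hyz : ybar = zbar)
    (hdesc : (n : ℝ)⁻¹ * ∑ i, ⟪y i, xhat i - x i⟫ ≤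
      -(μ / n) * ∑ i, ‖xhat i - x i‖ ^ 2
        - (α * n)⁻¹ * ∑ i, h (x' i) + (α * n)⁻¹ * ∑ i, h (x i)) :
    U xbar' + (n : ℝ)⁻¹ * ∑ i, h (x' i) - U xbar - (n : ℝ)⁻¹ * ∑ i, h (x i) ≤
      3 * α * γ / (2 * n)
          * (L ^ 2 * ∑ i, ‖x i - xbar‖ ^ 2 + n * ‖m - zbar‖ ^ 2
              + ∑ i, ‖y i - ybar‖ ^ 2)
        + α / n * (-μ + 1 / (2 * γ) + α * L / 2)
            * ∑ i, ‖xhat i - x i‖ ^ 2 := by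
  have hn0 : (0 : ℝ) < n := by exact_mod_cast hn
  have hα0 : 0 < α := hα.1
  obtain ⟨-, -, hcol⟩ := hW
  set δ : Fin n → EuclideanSpace ℝ (Fin d) := fun i => xhat i - x i with hδ
  set δbar := (n : ℝ)⁻¹ • ∑ i, δ i with hδbar
  set g := (n : ℝ)⁻¹ • ∑ i, gradient (u i) xbar with hg
  have hmix : ∑ i, x' i = ∑ i, x i + α • ∑ i, δ i := by
    simp_rw [hx']
    rw [sum_comm]
    simp_rw [← sum_smul, hcol, one_smul, sum_add_distrib, smul_sum, hδ]
  have hxx : xbar' = xbar + α • δbar := by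
    rw [hxbar', hmix, smul_add, ← hxbar, smul_comm]
  have hUle : U xbar' ≤ U xbar + α * ⟪g, δbar⟫ + L / 2 * α ^ 2 * ‖δbar‖ ^ 2 := by
    have h1 : ∑ i, u i xbar' ≤ ∑ i, (u i xbar + ⟪gradient (u i) xbar, α • δbar⟫
        + L / 2 * ‖α • δbar‖ ^ 2) := by
      rw [hxx]
      exact sum_le_sum fun i _ => smooth_upper_bound (hdiff i) (hlip i) _ _
    have h2 := mul_le_mul_of_nonneg_left h1 (inv_nonneg.2 hn0.le)
    rw [hU, hU]
    refine h2.trans_eq ?_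
    rw [sum_add_distrib, sum_add_distrib, ← sum_inner, hg, real_inner_smul_left,
      real_inner_smul_right, norm_smul, mul_pow, Real.norm_eq_abs, sq_abs, sum_const, card_univ,
      Fintype.card_fin, nsmul_eq_mul]
    field_simp
  have hgm : ‖g - m‖ ^ 2 ≤ (n : ℝ)⁻¹ * (L ^ 2 * ∑ i, ‖x i - xbar‖ ^ 2) := by
    rw [hg, hm, ← smul_sub, ← sum_sub_distrib]
    refine (norm_sq_average_le hn _).trans ?_
    refine mul_le_mul_of_nonneg_left ?_ (inv_nonneg.2 hn0.le)
    rw [mul_sum]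
    refine sum_le_sum fun i _ => ?_
    rw [← mul_pow, norm_sub_rev (x i)]
    gcongr
    exact hlip i _ _
  have hδle : ‖δbar‖ ^ 2 ≤ (n : ℝ)⁻¹ * ∑ i, ‖δ i‖ ^ 2 := norm_sq_average_le hn δ
  have hinner : ⟪g, δbar⟫ ≤ (n : ℝ)⁻¹ * ∑ i, ⟪y i, δ i⟫
      + (n : ℝ)⁻¹ * (3 * γ / 2 * (n * ‖g - m‖ ^ 2 + n * ‖m - zbar‖ ^ 2 + ∑ i, ‖y i - ybar‖ ^ 2)
        + 1 / (2 * γ) * ∑ i, ‖δ i‖ ^ 2) := by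
    rw [hδbar, real_inner_smul_right, inner_sum, ← mul_add]
    refine mul_le_mul_of_nonneg_left ?_ (inv_nonneg.2 hn0.le)
    calc ∑ i, ⟪g, δ i⟫ ≤ ∑ i, (⟪y i, δ i⟫ + (3 * γ / 2 *
          (‖g - m‖ ^ 2 + ‖m - zbar‖ ^ 2 + ‖y i - ybar‖ ^ 2) + 1 / (2 * γ) * ‖δ i‖ ^ 2)) := by
          refine sum_le_sum fun i _ => ?_
          have h1 := inner_add_three_le hγ (g - m) (m - zbar) (ybar - y i) (δ i)
          have h2 : g - m + (m - zbar) + (ybar - y i) = g - y i := by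
            rw [hyz]
            abel
          rw [h2, inner_sub_left, norm_sub_rev ybar] at h1
          linarith
      _ = _ := by
          simp only [sum_add_distrib, ← mul_sum, sum_const, card_univ, Fintype.card_fin,
            nsmul_eq_mul]
  have hgm' : (n : ℝ) * ‖g - m‖ ^ 2 ≤ L ^ 2 * ∑ i, ‖x i - xbar‖ ^ 2 := by
    rwa [← le_inv_mul_iff₀ hn0]
  set A := ∑ i, ‖x i - xbar‖ ^ 2
  set B := ∑ i, ‖y i - ybar‖ ^ 2
  set D := ∑ i, ‖δ i‖ ^ 2
  set H := ∑ i, h (x i)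
  set H' := ∑ i, h (x' i)
  have key : ⟪g, δbar⟫ ≤ (-(μ / n) * D - (α * n)⁻¹ * H' + (α * n)⁻¹ * H)
      + (n : ℝ)⁻¹ * (3 * γ / 2 * (L ^ 2 * A + n * ‖m - zbar‖ ^ 2 + B) + 1 / (2 * γ) * D) := by
    have h1 : (n : ℝ)⁻¹ * (3 * γ / 2 * (n * ‖g - m‖ ^ 2 + n * ‖m - zbar‖ ^ 2 + B)
        + 1 / (2 * γ) * D) ≤
        (n : ℝ)⁻¹ * (3 * γ / 2 * (L ^ 2 * A + n * ‖m - zbar‖ ^ 2 + B) + 1 / (2 * γ) * D) := by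
      gcongr
    exact hinner.trans (add_le_add hdesc h1)
  have hstep : U xbar' ≤ U xbar + α * ((-(μ / n) * D - (α * n)⁻¹ * H' + (α * n)⁻¹ * H)
      + (n : ℝ)⁻¹ * (3 * γ / 2 * (L ^ 2 * A + n * ‖m - zbar‖ ^ 2 + B) + 1 / (2 * γ) * D))
      + L / 2 * α ^ 2 * ((n : ℝ)⁻¹ * D) := by
    refine hUle.trans ?_
    gcongr
  have hfin : α * ((-(μ / n) * D - (α * n)⁻¹ * H' + (α * n)⁻¹ * H)
      + (n : ℝ)⁻¹ * (3 * γ / 2 * (L ^ 2 * A + n * ‖m - zbar‖ ^ 2 + B) + 1 / (2 * γ) * D))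
      + L / 2 * α ^ 2 * ((n : ℝ)⁻¹ * D) =
      3 * α * γ / (2 * n) * (L ^ 2 * A + n * ‖m - zbar‖ ^ 2 + B)
        + α / n * (-μ + 1 / (2 * γ) + α * L / 2) * D - (n : ℝ)⁻¹ * H' + (n : ℝ)⁻¹ * H := by
    field_simp
    ring
  linarith
end
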